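/- Let γ = 1/(3L_f) with L_f = L_ψ + L_ω. Let (y_t, z_t, x_t) be the iterates of the VR-TOS algorithm with uniform q-memorization, define the dual iterate u_t = (y_t − z_t)/γ, and the ergodic averages x̄_t = (∑_{k=0}^t x_k)/(t+1), ū_t = (∑_{k=0}^t u_k)/(t+1). Then for every (x,u) ∈ dom g × dom h*, setting y = x + γu and taking any y* ∈ Fix(G_γ), the expected saddle-point suboptimality satisfies E[L(x̄_t, u) − L(x, ū_t)] ≤ (10n/(q(t+1))) · [ (3L_f q/(20n))‖y_0 − y‖² + (3L_f q/(2n))‖y_0 − y*‖² + H_0 ]. -/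

import Mathlib

open Finset
open scoped RealInnerProductSpace

noncomputable section

variable {p : ℕ}

/-- proper, lower semicontinuous, convex extended-real function. -/
structure ProperLscConvex (g : EuclideanSpace ℝ (Fin p) → EReal) : Prop where
  proper : ∃ x, g x ≠ ⊤
  ne_bot : ∀ x, g x ≠ ⊥
  lsc : LowerSemicontinuous g
  convex : ∀ x y : EuclideanSpace ℝ (Fin p), ∀ a b : ℝ, 0 ≤ a → 0 ≤ b → a + b = 1 →
    g (a • x + b • y) ≤ (a : EReal) * g x + (b : EReal) * g y

/-- `z = prox_{γ g}(x)`. -/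
def IsProx (γ : ℝ) (g : EuclideanSpace ℝ (Fin p) → EReal) (x z : EuclideanSpace ℝ (Fin p)) : Prop :=
  ∀ w, g z + (((1 / (2 * γ)) * ‖x - z‖ ^ 2 : ℝ) : EReal)
      ≤ g w + (((1 / (2 * γ)) * ‖x - w‖ ^ 2 : ℝ) : EReal)

/-- Fenchel conjugate. -/
def fconj (g : EuclideanSpace ℝ (Fin p) → EReal) (u : EuclideanSpace ℝ (Fin p)) : EReal :=
  ⨆ x, ((⟪x, u⟫ : ℝ) : EReal) - g x

/-- The Lagrangian `L(x, u) = f(x) + g(x) + ⟨x, u⟩ − h*(u)`. -/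
def Lagr (f : EuclideanSpace ℝ (Fin p) → ℝ) (g h : EuclideanSpace ℝ (Fin p) → EReal)
    (x u : EuclideanSpace ℝ (Fin p)) : EReal :=
  ((f x : ℝ) : EReal) + g x + ((⟪x, u⟫ : ℝ) : EReal) - fconj h u

/-- extension of a finite sequence of draws to an infinite one. -/
def extSeq {S : Type} [Inhabited S] (T : ℕ) (v : Fin T → S) : ℕ → S :=
  fun k => if hk : k < T then v ⟨k, hk⟩ else default

/-- probability of a finite sequence of independent draws with weights `w`. -/
def prodW {S : Type} [Fintype S] (w : S → ℝ) (T : ℕ) (v : Fin T → S) : ℝ :=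
  ∏ k, w (v k)

/-!
The proof is a Lyapunov argument. Write `∇f`, `L` for the gradient of the smooth part and its
Lipschitz constant, `v` for the gradient estimate of a step, `(z*, u*)` for the primal-dual solution
encoded by the fixed point `y* = z* + γ u*`. The subgradients of `g` and `h` delivered by the two
proximal steps give two bounds for one iteration:

* at any `(x', u')`, the gap `L(x, u') - L(x', u)` is at most the decrease of `‖y - (x' + γ u')‖² /
  (2 γ)`, plus a term linear in `∇f(z) - v`, which has mean zero, plus `‖∇f(z) - v‖² / (4 L)`;
* by monotonicity, the decrease of `‖y - y*‖² / (2 γ)` is at least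
  `⟨v - ∇f(z*), z - z*⟩ - (γ / 2) ‖v - ∇f(z*)‖²`.

With `H = ∑ ‖α_i - ∇ψ_i(z*)‖²` and `G = ∑ ‖∇ψ_i(z) - ∇ψ_i(z*)‖²`, the mean squares of both
gradient errors are controlled by `H`, `G` and, through cocoercivity, by
`⟨∇f(z) - ∇f(z*), z - z*⟩`. The second bound, taken with weight `10`, pays for everything but a
multiple of `H - G`, and a memory update trades exactly `H` for `G` with probability `q / n`. Hence
gap plus Lyapunov function decreases in conditional expectation, which telescopes; Jensen's
inequality for the convex-concave Lagrangian passes to the ergodic means. Finally all `∇ψ_i` are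
constant on the set of minimizers, because the Bregman divergence of each `ψ_i` between two of them
vanishes, so that the memory error may be measured at `x*`.
-/

section ConvexAnalysis

variable {E : Type*} [NormedAddCommGroup E] [InnerProductSpace ℝ E]

theorem two_mul_inner_sub_sub (a b c : E) :
    2 * ⟪b - a, c - b⟫ = ‖a - c‖ ^ 2 - ‖b - c‖ ^ 2 - ‖b - a‖ ^ 2 := by
  have h := norm_add_sq_real (b - a) (c - b)
  rw [sub_add_sub_cancel', norm_sub_rev c a, norm_sub_rev c b] at h
  linarith

theorem inner_le_mul_norm_sq_add_mul_norm_sq {c : ℝ} (hc : 0 < c) (a b : E) :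
    ⟪a, b⟫ ≤ (4 * c)⁻¹ * ‖a‖ ^ 2 + c * ‖b‖ ^ 2 := by
  have hsq : 0 ≤ (4 * c)⁻¹ * (‖a‖ - 2 * c * ‖b‖) ^ 2 := by positivity
  have hexpand : (4 * c)⁻¹ * (‖a‖ - 2 * c * ‖b‖) ^ 2
      = (4 * c)⁻¹ * ‖a‖ ^ 2 + c * ‖b‖ ^ 2 - ‖a‖ * ‖b‖ := by
    field_simp
    ring
  linarith [real_inner_le_norm a b]

theorem norm_sub_sq_le_two_mul (a b : E) : ‖a - b‖ ^ 2 ≤ 2 * ‖a‖ ^ 2 + 2 * ‖b‖ ^ 2 := by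
  linarith [parallelogram_law_with_norm ℝ a b, sq_nonneg ‖a + b‖, sq ‖a + b‖, sq ‖a - b‖,
    sq ‖a‖, sq ‖b‖]

theorem sum_norm_sub_sq_le_of_sum_sub_eq_zero {ι : Type*} {s : Finset ι} {b : ι → E} {m : E}
    (hm : ∑ i ∈ s, (b i - m) = 0) : ∑ i ∈ s, ‖b i - m‖ ^ 2 ≤ ∑ i ∈ s, ‖b i‖ ^ 2 := by
  have hcross : ∑ i ∈ s, ⟪b i - m, m⟫ = 0 := by rw [← sum_inner, hm, inner_zero_left]
  calc ∑ i ∈ s, ‖b i - m‖ ^ 2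
      = ∑ i ∈ s, ‖b i - m‖ ^ 2 + 2 * ∑ i ∈ s, ⟪b i - m, m⟫ := by rw [hcross]; ring
    _ = ∑ i ∈ s, (‖b i - m‖ ^ 2 + 2 * ⟪b i - m, m⟫) := by rw [sum_add_distrib, mul_sum]
    _ ≤ ∑ i ∈ s, ‖b i‖ ^ 2 := sum_le_sum fun i _ => by
      have h := norm_add_sq_real (b i - m) m
      rw [sub_add_cancel] at h
      linarith [sq_nonneg ‖m‖]

theorem le_of_forall_le_add_mul {a b c : ℝ} (h : ∀ l ∈ Set.Ioc (0 : ℝ) 1, a ≤ b + l * c) :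
    a ≤ b := by
  have hlim : Filter.Tendsto (fun l : ℝ => b + l * c) (nhdsWithin 0 (Set.Ioi 0)) (nhds b) :=
    ((by fun_prop : Continuous fun l : ℝ => b + l * c).tendsto' 0 b (by simp)).mono_left
      nhdsWithin_le_nhds
  exact ge_of_tendsto hlim (Filter.mem_of_superset (Ioc_mem_nhdsGT one_pos) h)

/-- Proper convex functions `E → (-∞, ∞]`. -/
structure ProperConvex (g : E → EReal) : Prop where
  proper : ∃ x, g x ≠ ⊤
  ne_bot : ∀ x, g x ≠ ⊥
  convex : ∀ x y : E, ∀ a b : ℝ, 0 ≤ a → 0 ≤ b → a + b = 1 →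
    g (a • x + b • y) ≤ (a : EReal) * g x + (b : EReal) * g y

/-- The relation `z = prox_{γ g}(x)`: `z` minimizes `g + ‖x - ·‖² / (2 γ)`. -/
def IsProxPoint (γ : ℝ) (g : E → EReal) (x z : E) : Prop :=
  ∀ w, g z + ((1 / (2 * γ) * ‖x - z‖ ^ 2 : ℝ) : EReal)
    ≤ g w + ((1 / (2 * γ) * ‖x - w‖ ^ 2 : ℝ) : EReal)

/-- The relation `u ∈ ∂g(z)`, for functions which never take the value `⊥`; it includes
`z ∈ dom g` and is tested on `dom g` only, where `EReal.toReal` loses nothing. -/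
def HasSubgradientAt (g : E → EReal) (u z : E) : Prop :=
  g z ≠ ⊤ ∧ ∀ w, g w ≠ ⊤ → (g z).toReal + ⟪u, w - z⟫ ≤ (g w).toReal

/-- The Fenchel conjugate `g*`. -/
def fenchelConj (g : E → EReal) (u : E) : EReal :=
  ⨆ x, ((⟪x, u⟫ : ℝ) : EReal) - g x

/-- The Lagrangian `L(x, u) = f(x) + g(x) + ⟨x, u⟩ - h*(u)`. -/
def lagrangian (f : E → ℝ) (g h : E → EReal) (x u : E) : EReal :=
  ((f x : ℝ) : EReal) + g x + ((⟪x, u⟫ : ℝ) : EReal) - fenchelConj h u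

/-- The real-valued Lagrangian, meaningful on `dom g × dom h*`. -/
def lagrangianReal (f : E → ℝ) (g h : E → EReal) (x u : E) : ℝ :=
  f x + (g x).toReal + ⟪x, u⟫ - (fenchelConj h u).toReal

variable {f : E → ℝ} {g h : E → EReal} {γ : ℝ} {u x z : E}

theorem ProperConvex.coe_toReal (hg : ProperConvex g) (hx : g x ≠ ⊤) :
    ((g x).toReal : EReal) = g x :=
  EReal.coe_toReal hx (hg.ne_bot x)

theorem ProperConvex.map_combo_le (hg : ProperConvex g) {x y : E} (hx : g x ≠ ⊤) (hy : g y ≠ ⊤)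
    {a b : ℝ} (ha : 0 ≤ a) (hb : 0 ≤ b) (hab : a + b = 1) :
    g (a • x + b • y) ≤ ((a * (g x).toReal + b * (g y).toReal : ℝ) : EReal) := by
  have hconv := hg.convex x y a b ha hb hab
  rwa [← hg.coe_toReal hx, ← hg.coe_toReal hy, ← EReal.coe_mul, ← EReal.coe_mul,
    ← EReal.coe_add] at hconv

theorem ProperConvex.convexOn_toReal (hg : ProperConvex g) :
    ConvexOn ℝ {x | g x ≠ ⊤} fun x => (g x).toReal := by
  have hdom : Convex ℝ {x | g x ≠ ⊤} := fun x hx y hy a b ha hb hab =>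
    ne_top_of_le_ne_top (EReal.coe_ne_top _) (hg.map_combo_le hx hy ha hb hab)
  refine ⟨hdom, fun x hx y hy a b ha hb hab => EReal.coe_le_coe_iff.1 ?_⟩
  rw [hg.coe_toReal (hdom hx hy ha hb hab)]
  exact hg.map_combo_le hx hy ha hb hab

namespace IsProxPoint

theorem ne_top (hg : ProperConvex g) (hz : IsProxPoint γ g x z) : g z ≠ ⊤ := by
  obtain ⟨w, hw⟩ := hg.proper
  intro htop
  have hle := hz w
  rw [htop, EReal.top_add_coe, ← hg.coe_toReal hw, ← EReal.coe_add, top_le_iff] at hle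
  exact EReal.coe_ne_top _ hle

theorem toReal_add_le (hg : ProperConvex g) (hz : IsProxPoint γ g x z) {w : E} (hw : g w ≠ ⊤) :
    (g z).toReal + 1 / (2 * γ) * ‖x - z‖ ^ 2 ≤ (g w).toReal + 1 / (2 * γ) * ‖x - w‖ ^ 2 := by
  have hle := hz w
  rwa [← hg.coe_toReal (hz.ne_top hg), ← hg.coe_toReal hw, ← EReal.coe_add, ← EReal.coe_add,
    EReal.coe_le_coe_iff] at hle

theorem hasSubgradientAt (hγ : 0 < γ) (hg : ProperConvex g) (hz : IsProxPoint γ g x z) :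
    HasSubgradientAt g (γ⁻¹ • (x - z)) z := by
  refine ⟨hz.ne_top hg, fun w hw => ?_⟩
  -- Test minimality of `z` at `z + l (w - z)`, divide by `l` and let `l → 0`.
  refine le_of_forall_le_add_mul (c := 1 / (2 * γ) * ‖w - z‖ ^ 2) fun l ⟨hl0, hl1⟩ => ?_
  have hdom : g ((1 - l) • z + l • w) ≠ ⊤ :=
    hg.convexOn_toReal.1 (hz.ne_top hg) hw (by linarith) hl0.le (by ring)
  have hconv := hg.convexOn_toReal.2 (hz.ne_top hg) hw (by linarith : 0 ≤ 1 - l) hl0.le (by ring)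
  have hmin := hz.toReal_add_le hg hdom
  have hdist : 1 / (2 * γ) * ‖x - ((1 - l) • z + l • w)‖ ^ 2 = 1 / (2 * γ) * ‖x - z‖ ^ 2
      - l * ⟪γ⁻¹ • (x - z), w - z⟫ + l * (l * (1 / (2 * γ) * ‖w - z‖ ^ 2)) := by
    rw [show x - ((1 - l) • z + l • w) = (x - z) - l • (w - z) by module, norm_sub_sq_real,
      real_inner_smul_right, real_inner_smul_left, norm_smul, Real.norm_of_nonneg hl0.le]
    field_simp
  simp only [smul_eq_mul] at hconv
  refine le_of_mul_le_mul_left ?_ hl0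
  linarith

end IsProxPoint

theorem HasSubgradientAt.inner_sub_nonneg {u' z' : E} (hu : HasSubgradientAt g u z)
    (hu' : HasSubgradientAt g u' z') : 0 ≤ ⟪u - u', z - z'⟫ := by
  have h₁ := hu.2 z' hu'.1
  have h₂ := hu'.2 z hu.1
  rw [← neg_sub z z', inner_neg_right] at h₁
  rw [inner_sub_left]
  linarith

namespace ProperConvex

theorem inner_sub_le_fenchelConj (hh : ProperConvex h) (hz : h z ≠ ⊤) (u : E) :
    ((⟪z, u⟫ - (h z).toReal : ℝ) : EReal) ≤ fenchelConj h u := by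
  rw [EReal.coe_sub, hh.coe_toReal hz]
  exact le_iSup (fun x => ((⟪x, u⟫ : ℝ) : EReal) - h x) z

theorem fenchelConj_ne_bot (hh : ProperConvex h) (u : E) : fenchelConj h u ≠ ⊥ := by
  obtain ⟨z, hz⟩ := hh.proper
  exact ne_bot_of_le_ne_bot (EReal.coe_ne_bot _) (hh.inner_sub_le_fenchelConj hz u)

theorem coe_toReal_fenchelConj (hh : ProperConvex h) (hu : fenchelConj h u ≠ ⊤) :
    ((fenchelConj h u).toReal : EReal) = fenchelConj h u :=
  EReal.coe_toReal hu (hh.fenchelConj_ne_bot u)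

theorem inner_sub_le_toReal_fenchelConj (hh : ProperConvex h) (hz : h z ≠ ⊤)
    (hu : fenchelConj h u ≠ ⊤) : ⟪z, u⟫ - (h z).toReal ≤ (fenchelConj h u).toReal := by
  rw [← EReal.coe_le_coe_iff, hh.coe_toReal_fenchelConj hu]
  exact hh.inner_sub_le_fenchelConj hz u

theorem fenchelConj_le (hh : ProperConvex h) {c : ℝ}
    (hc : ∀ x, h x ≠ ⊤ → ⟪x, u⟫ - (h x).toReal ≤ c) : fenchelConj h u ≤ c := by
  refine iSup_le fun x => ?_
  by_cases hx : h x = ⊤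
  · simp [hx]
  · rw [← hh.coe_toReal hx, ← EReal.coe_sub, EReal.coe_le_coe_iff]
    exact hc x hx

theorem convexOn_toReal_fenchelConj (hh : ProperConvex h) :
    ConvexOn ℝ {u | fenchelConj h u ≠ ⊤} fun u => (fenchelConj h u).toReal := by
  have hcombo : ∀ u ∈ {u | fenchelConj h u ≠ ⊤}, ∀ v ∈ {u | fenchelConj h u ≠ ⊤}, ∀ a b : ℝ,
      0 ≤ a → 0 ≤ b → a + b = 1 → fenchelConj h (a • u + b • v)
        ≤ ((a * (fenchelConj h u).toReal + b * (fenchelConj h v).toReal : ℝ) : EReal) := by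
    intro u hu v hv a b ha hb hab
    refine hh.fenchelConj_le fun x hx => ?_
    have hu' := mul_le_mul_of_nonneg_left (hh.inner_sub_le_toReal_fenchelConj hx hu) ha
    have hv' := mul_le_mul_of_nonneg_left (hh.inner_sub_le_toReal_fenchelConj hx hv) hb
    obtain rfl : b = 1 - a := by linarith
    rw [inner_add_right, real_inner_smul_right, real_inner_smul_right]
    linarith
  have hdom : Convex ℝ {u | fenchelConj h u ≠ ⊤} := fun u hu v hv a b ha hb hab =>
    ne_top_of_le_ne_top (EReal.coe_ne_top _) (hcombo u hu v hv a b ha hb hab)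
  refine ⟨hdom, fun u hu v hv a b ha hb hab => EReal.coe_le_coe_iff.1 ?_⟩
  rw [hh.coe_toReal_fenchelConj (hdom hu hv ha hb hab)]
  exact hcombo u hu v hv a b ha hb hab

end ProperConvex

theorem HasSubgradientAt.fenchelConj_eq (hh : ProperConvex h) (hu : HasSubgradientAt h u z) :
    fenchelConj h u = ((⟪z, u⟫ - (h z).toReal : ℝ) : EReal) := by
  refine le_antisymm (hh.fenchelConj_le fun x hx => ?_) (hh.inner_sub_le_fenchelConj hu.1 u)
  have hle := hu.2 x hx
  rw [inner_sub_right, real_inner_comm, real_inner_comm z u] at hle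
  linarith

theorem coe_lagrangianReal (hg : ProperConvex g) (hh : ProperConvex h) (hx : g x ≠ ⊤)
    (hu : fenchelConj h u ≠ ⊤) : (lagrangianReal f g h x u : EReal) = lagrangian f g h x u := by
  rw [lagrangianReal, lagrangian, EReal.coe_sub, EReal.coe_add, EReal.coe_add, hg.coe_toReal hx,
    hh.coe_toReal_fenchelConj hu]

theorem convexOn_lagrangianReal_left (hf : ConvexOn ℝ Set.univ f) (hg : ProperConvex g)
    (h : E → EReal) (u : E) :
    ConvexOn ℝ {x | g x ≠ ⊤} fun x => lagrangianReal f g h x u := by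
  have hlin : ConvexOn ℝ {x | g x ≠ ⊤} fun x => ⟪x, u⟫ :=
    ((innerₗ E).flip u).convexOn hg.convexOn_toReal.1
  exact (((hf.subset (Set.subset_univ _) hg.convexOn_toReal.1).add hg.convexOn_toReal).add
    hlin).add_const (-(fenchelConj h u).toReal)

theorem concaveOn_lagrangianReal_right (hh : ProperConvex h) (f : E → ℝ) (g : E → EReal) (x : E) :
    ConcaveOn ℝ {u | fenchelConj h u ≠ ⊤} fun u => lagrangianReal f g h x u := by
  have hlin : ConcaveOn ℝ {u | fenchelConj h u ≠ ⊤} fun u => ⟪x, u⟫ :=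
    (innerₗ E x).concaveOn hh.convexOn_toReal_fenchelConj.1
  have hconst := concaveOn_const (f x + (g x).toReal) hh.convexOn_toReal_fenchelConj.1
  exact (hconst.add hlin).sub hh.convexOn_toReal_fenchelConj

end ConvexAnalysis

section ErgodicMean

variable {E : Type*} [AddCommGroup E] [Module ℝ E]

/-- The average of the first `t + 1` terms of a sequence. -/
def ergodicMean (a : ℕ → E) (t : ℕ) : E :=
  ((t : ℝ) + 1)⁻¹ • ∑ k ∈ range (t + 1), a k

variable {C : Set E} {a : ℕ → E} {φ : E → ℝ} {t : ℕ}

theorem sum_inv_add_one_eq_one (t : ℕ) : ∑ _k ∈ range (t + 1), ((t : ℝ) + 1)⁻¹ = 1 := by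
  rw [sum_const, card_range, nsmul_eq_mul, Nat.cast_add_one]
  exact mul_inv_cancel₀ (by positivity)

theorem ergodicMean_mem (hC : Convex ℝ C) (ha : ∀ k, a k ∈ C) : ergodicMean a t ∈ C := by
  rw [ergodicMean, smul_sum]
  exact hC.sum_mem (fun _ _ => by positivity) (sum_inv_add_one_eq_one t) fun k _ => ha k

theorem map_ergodicMean_le (hφ : ConvexOn ℝ C φ) (ha : ∀ k, a k ∈ C) :
    φ (ergodicMean a t) ≤ ergodicMean (fun k => φ (a k)) t := by
  rw [ergodicMean, ergodicMean, smul_sum, smul_sum]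
  exact hφ.map_sum_le (fun _ _ => by positivity) (sum_inv_add_one_eq_one t) fun k _ => ha k

theorem le_map_ergodicMean (hφ : ConcaveOn ℝ C φ) (ha : ∀ k, a k ∈ C) :
    ergodicMean (fun k => φ (a k)) t ≤ φ (ergodicMean a t) := by
  rw [ergodicMean, ergodicMean, smul_sum, smul_sum]
  exact hφ.le_map_sum (fun _ _ => by positivity) (sum_inv_add_one_eq_one t) fun k _ => ha k

end ErgodicMean

section SmoothConvex

variable {E : Type*} [NormedAddCommGroup E] [InnerProductSpace ℝ E]

theorem lagrangianReal_ergodicMean_sub_le {f : E → ℝ} {g h : E → EReal} {ξ μ : ℕ → E}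
    (hf : ConvexOn ℝ Set.univ f) (hg : ProperConvex g) (hh : ProperConvex h)
    (hξ : ∀ k, g (ξ k) ≠ ⊤) (hμ : ∀ k, fenchelConj h (μ k) ≠ ⊤) (x u : E) (t : ℕ) :
    lagrangianReal f g h (ergodicMean ξ t) u - lagrangianReal f g h x (ergodicMean μ t)
      ≤ ergodicMean (fun k => lagrangianReal f g h (ξ k) u - lagrangianReal f g h x (μ k)) t := by
  have hleft := map_ergodicMean_le (t := t) (convexOn_lagrangianReal_left hf hg h u) hξ
  have hright := le_map_ergodicMean (t := t) (concaveOn_lagrangianReal_right hh f g x) hμ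
  calc _ ≤ _ := sub_le_sub hleft hright
    _ = _ := by simp only [ergodicMean, sum_sub_distrib, smul_sub]

/-- The Bregman divergence of `F` between `y` and `x`, where `G` plays the role of `∇F`. -/
def bregmanDiv (F : E → ℝ) (G : E → E) (y x : E) : ℝ :=
  F y - F x - ⟪G x, y - x⟫

theorem bregmanDiv_three_point (F : E → ℝ) (G : E → E) (x y v : E) :
    bregmanDiv F G v y = bregmanDiv F G v x + bregmanDiv F G x y + ⟪G x - G y, v - x⟫ := by
  rw [show v - x = (v - y) - (x - y) by abel]
  simp only [bregmanDiv, inner_sub_left, inner_sub_right]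
  ring

theorem bregmanDiv_add_bregmanDiv_swap (F : E → ℝ) (G : E → E) (x y : E) :
    bregmanDiv F G x y + bregmanDiv F G y x = ⟪G x - G y, x - y⟫ := by
  simp only [bregmanDiv, inner_sub_left, inner_sub_right]
  ring

variable [CompleteSpace E]

/-- Differentiable convex functions `F` with an `L`-Lipschitz gradient `G`. -/
structure SmoothConvex (F : E → ℝ) (G : E → E) (L : ℝ) : Prop where
  convexOn : ConvexOn ℝ Set.univ F
  hasGradientAt : ∀ x, HasGradientAt F (G x) x
  norm_sub_le : ∀ x y, ‖G x - G y‖ ≤ L * ‖x - y‖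

namespace SmoothConvex

variable {F F' : E → ℝ} {G G' : E → E} {L L' : ℝ}

theorem hasDerivAt_add_smul (hF : SmoothConvex F G L) (x d : E) (s : ℝ) :
    HasDerivAt (fun s : ℝ => F (x + s • d)) ⟪G (x + s • d), d⟫ s := by
  have hline : HasDerivAt (fun s : ℝ => x + s • d) d s := by
    simpa using ((hasDerivAt_id s).smul_const d).const_add x
  simpa [Function.comp_def] using
    (hF.hasGradientAt (x + s • d)).hasFDerivAt.comp_hasDerivAt s hline

theorem bregmanDiv_nonneg (hF : SmoothConvex F G L) (y x : E) : 0 ≤ bregmanDiv F G y x := by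
  have hconv : ConvexOn ℝ Set.univ fun s : ℝ => F (x + s • (y - x)) := by
    simpa [Function.comp_def, AffineMap.lineMap_apply, add_comm] using
      hF.convexOn.comp_affineMap (AffineMap.lineMap (k := ℝ) x y)
  have hslope := hconv.le_slope_of_hasDerivAt (Set.mem_univ 0) (Set.mem_univ 1) one_pos
    (hF.hasDerivAt_add_smul x (y - x) 0)
  simp only [zero_smul, add_zero, slope_def_field, one_smul, add_sub_cancel, sub_zero,
    div_one] at hslope
  rw [bregmanDiv]
  linarith

theorem bregmanDiv_le (hF : SmoothConvex F G L) (y x : E) :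
    bregmanDiv F G y x ≤ L / 2 * ‖y - x‖ ^ 2 := by
  set d := y - x with hd
  have hφ := hF.hasDerivAt_add_smul x d
  have hψ : ∀ s : ℝ, HasDerivAt (fun s => F x + s * ⟪G x, d⟫ + L / 2 * ‖d‖ ^ 2 * s ^ 2)
      (⟪G x, d⟫ + L * ‖d‖ ^ 2 * s) s := fun s => by
    have h := (((hasDerivAt_id s).mul_const ⟪G x, d⟫).const_add (F x)).add
      (((hasDerivAt_id s).pow 2).const_mul (L / 2 * ‖d‖ ^ 2))
    refine h.congr_deriv ?_
    simp only [id]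
    ring
  have hderiv : ∀ s ∈ Set.Ico (0 : ℝ) 1,
      ⟪G (x + s • d), d⟫ ≤ ⟪G x, d⟫ + L * ‖d‖ ^ 2 * s := fun s hs => by
    have hlip := hF.norm_sub_le (x + s • d) x
    rw [add_sub_cancel_left, norm_smul, Real.norm_of_nonneg hs.1] at hlip
    have hinner := (real_inner_le_norm (G (x + s • d) - G x) d).trans
      (mul_le_mul_of_nonneg_right hlip (norm_nonneg d))
    rw [inner_sub_left] at hinner
    linarith
  have hle := image_le_of_deriv_right_le_deriv_boundary (a := (0 : ℝ)) (b := 1)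
    (fun s _ => (hφ s).continuousAt.continuousWithinAt) (fun s _ => (hφ s).hasDerivWithinAt)
    (by simp) (fun s _ => (hψ s).continuousAt.continuousWithinAt)
    (fun s _ => (hψ s).hasDerivWithinAt) hderiv (Set.right_mem_Icc.2 zero_le_one)
  simp only [one_smul, one_mul, one_pow, mul_one, hd, add_sub_cancel] at hle
  rw [bregmanDiv]
  linarith

theorem norm_sub_sq_le_bregmanDiv (hF : SmoothConvex F G L) (hL : 0 < L) (y x : E) :
    ‖G y - G x‖ ^ 2 ≤ 2 * L * bregmanDiv F G y x := by
  -- Nonnegativity of the divergence from `x` at the gradient step `v` from `y`.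
  set v := y - L⁻¹ • (G y - G x) with hv
  have hstep : v - y = -(L⁻¹ • (G y - G x)) := by rw [hv]; abel
  have hnonneg := hF.bregmanDiv_nonneg v x
  have hupper := hF.bregmanDiv_le v y
  rw [hstep, norm_neg, norm_smul, mul_pow, Real.norm_eq_abs, sq_abs] at hupper
  rw [bregmanDiv_three_point F G y x v, hstep, inner_neg_right, real_inner_smul_right,
    real_inner_self_eq_norm_sq] at hnonneg
  have hscaled : 0 ≤ 2 * L * (L / 2 * (L⁻¹ ^ 2 * ‖G y - G x‖ ^ 2) + bregmanDiv F G y x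
      + -(L⁻¹ * ‖G y - G x‖ ^ 2)) := mul_nonneg (by positivity) (by linarith)
  field_simp at hscaled
  linarith

theorem inner_sub_nonneg (hF : SmoothConvex F G L) (x y : E) : 0 ≤ ⟪G x - G y, x - y⟫ := by
  rw [← bregmanDiv_add_bregmanDiv_swap F]
  exact add_nonneg (hF.bregmanDiv_nonneg x y) (hF.bregmanDiv_nonneg y x)

theorem norm_sub_sq_le_inner (hF : SmoothConvex F G L) (hL : 0 < L) (x y : E) :
    ‖G x - G y‖ ^ 2 ≤ L * ⟪G x - G y, x - y⟫ := by
  have hxy := hF.norm_sub_sq_le_bregmanDiv hL x y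
  have hyx := hF.norm_sub_sq_le_bregmanDiv hL y x
  rw [norm_sub_rev] at hyx
  rw [← bregmanDiv_add_bregmanDiv_swap F]
  linarith

theorem add (hF : SmoothConvex F G L) (hF' : SmoothConvex F' G' L') :
    SmoothConvex (F + F') (G + G') (L + L') where
  convexOn := hF.convexOn.add hF'.convexOn
  hasGradientAt x := hasGradientAt_iff_hasFDerivAt.2 <| by
    simpa using (hF.hasGradientAt x).hasFDerivAt.add (hF'.hasGradientAt x).hasFDerivAt
  norm_sub_le x y := by
    rw [Pi.add_apply, Pi.add_apply, add_sub_add_comm, add_mul]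
    exact norm_add_le_of_le (hF.norm_sub_le x y) (hF'.norm_sub_le x y)

theorem const_smul (hF : SmoothConvex F G L) {c : ℝ} (hc : 0 ≤ c) :
    SmoothConvex (c • F) (c • G) (c * L) where
  convexOn := hF.convexOn.smul hc
  hasGradientAt x := hasGradientAt_iff_hasFDerivAt.2 <| by
    simpa using (hF.hasGradientAt x).hasFDerivAt.const_smul c
  norm_sub_le x y := by
    rw [Pi.smul_apply, Pi.smul_apply, ← smul_sub, norm_smul, Real.norm_of_nonneg hc, mul_assoc]
    exact mul_le_mul_of_nonneg_left (hF.norm_sub_le x y) hc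

theorem sum {ι : Type*} (s : Finset ι) {ψ : ι → E → ℝ} {gradψ : ι → E → E}
    (hψ : ∀ i, SmoothConvex (ψ i) (gradψ i) L) :
    SmoothConvex (∑ i ∈ s, ψ i) (∑ i ∈ s, gradψ i) (#s * L) := by
  classical
  induction s using Finset.induction_on with
  | empty =>
    exact ⟨convexOn_const 0 convex_univ, fun x => hasGradientAt_const x 0, fun x y => by simp⟩
  | insert i s hi ih =>
    have h := (hψ i).add ih
    rwa [sum_insert hi, sum_insert hi, card_insert_of_notMem hi, Nat.cast_add_one, add_mul,
      one_mul, add_comm (_ * L)]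

theorem weaken (hF : SmoothConvex F G L) (hF' : SmoothConvex F' G' L') :
    SmoothConvex F G (L + L') where
  convexOn := hF.convexOn
  hasGradientAt := hF.hasGradientAt
  norm_sub_le x y := by
    rw [add_mul]
    exact le_add_of_le_of_nonneg (hF.norm_sub_le x y)
      ((norm_nonneg _).trans (hF'.norm_sub_le x y))

end SmoothConvex

end SmoothConvex

section FiniteSum

variable {E : Type*} [NormedAddCommGroup E] [InnerProductSpace ℝ E] {n : ℕ}

/-- The smooth part `(1/n) ∑ ψ_j + ω` of the objective. -/
def finiteSum (ψ : Fin n → E → ℝ) (ω : E → ℝ) (x : E) : ℝ :=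
  (n : ℝ)⁻¹ * ∑ j, ψ j x + ω x

/-- The gradient `(1/n) ∑ ∇ψ_j + ∇ω` of `finiteSum ψ ω`. -/
def finiteSumGrad (gradψ : Fin n → E → E) (gradω : E → E) (x : E) : E :=
  (n : ℝ)⁻¹ • ∑ j, gradψ j x + gradω x

variable {ψ : Fin n → E → ℝ} {gradψ : Fin n → E → E} {ω : E → ℝ} {gradω : E → E} {Lψ Lω : ℝ}

theorem bregmanDiv_finiteSum (x y : E) :
    bregmanDiv (finiteSum ψ ω) (finiteSumGrad gradψ gradω) x y
      = (n : ℝ)⁻¹ * ∑ j, bregmanDiv (ψ j) (gradψ j) x y + bregmanDiv ω gradω x y := by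
  simp only [bregmanDiv, finiteSum, finiteSumGrad, inner_add_left, real_inner_smul_left, sum_inner,
    sum_sub_distrib]
  ring

theorem sum_inner_grad_sub (hn : 0 < n) (x y d : E) :
    ∑ j, ⟪gradψ j x - gradψ j y, d⟫ = n * ⟪finiteSumGrad gradψ gradω x
      - finiteSumGrad gradψ gradω y, d⟫ - n * ⟪gradω x - gradω y, d⟫ := by
  have hsum : ∑ j, ⟪gradψ j x - gradψ j y, d⟫ = n * ⟪(n : ℝ)⁻¹ • ∑ j, gradψ j x
      - (n : ℝ)⁻¹ • ∑ j, gradψ j y, d⟫ := by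
    rw [← smul_sub, real_inner_smul_left, mul_inv_cancel_left₀ (by positivity), ← sum_inner,
      sum_sub_distrib]
  rw [hsum, ← mul_sub, ← inner_sub_left, finiteSumGrad, finiteSumGrad]
  congr 2
  abel

variable [CompleteSpace E]

theorem smoothConvex_finiteSum (hn : 0 < n) (hψ : ∀ i, SmoothConvex (ψ i) (gradψ i) Lψ)
    (hω : SmoothConvex ω gradω Lω) :
    SmoothConvex (finiteSum ψ ω) (finiteSumGrad gradψ gradω) (Lψ + Lω) := by
  have h := ((SmoothConvex.sum univ hψ).const_smul (inv_nonneg.2 n.cast_nonneg)).add hω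
  rw [card_univ, Fintype.card_fin, inv_mul_cancel_left₀ (by positivity)] at h
  convert h using 1 <;> ext x <;> simp [finiteSum, finiteSumGrad]

theorem sum_norm_grad_sub_sq_le (hn : 0 < n) (hψ : ∀ i, SmoothConvex (ψ i) (gradψ i) Lψ)
    (hω : SmoothConvex ω gradω Lω) (hL : 0 < Lψ + Lω) (x y : E) :
    ∑ i, ‖gradψ i x - gradψ i y‖ ^ 2 ≤ (Lψ + Lω) * (n * ⟪finiteSumGrad gradψ gradω x
      - finiteSumGrad gradψ gradω y, x - y⟫) := by
  calc ∑ i, ‖gradψ i x - gradψ i y‖ ^ 2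
      ≤ ∑ i, (Lψ + Lω) * ⟪gradψ i x - gradψ i y, x - y⟫ :=
        sum_le_sum fun i _ => ((hψ i).weaken hω).norm_sub_sq_le_inner hL x y
    _ ≤ _ := by
        rw [← mul_sum, sum_inner_grad_sub (gradω := gradω) hn]
        gcongr
        exact sub_le_self _ (mul_nonneg n.cast_nonneg (hω.inner_sub_nonneg x y))

theorem sum_norm_grad_add_sub_sq_le (hn : 0 < n) (hψ : ∀ i, SmoothConvex (ψ i) (gradψ i) Lψ)
    (hω : SmoothConvex ω gradω Lω) (hL : 0 < Lψ + Lω) (x y : E) :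
    ∑ i, ‖(gradψ i x + gradω x) - (gradψ i y + gradω y)‖ ^ 2
      ≤ (Lψ + Lω) * (n * ⟪finiteSumGrad gradψ gradω x - finiteSumGrad gradψ gradω y, x - y⟫) := by
  calc ∑ i, ‖(gradψ i x + gradω x) - (gradψ i y + gradω y)‖ ^ 2
      ≤ ∑ i, (Lψ + Lω) * ⟪(gradψ i x + gradω x) - (gradψ i y + gradω y), x - y⟫ :=
        sum_le_sum fun i _ => ((hψ i).add hω).norm_sub_sq_le_inner hL x y
    _ = _ := by
        simp only [add_sub_add_comm, inner_add_left]
        rw [← mul_sum, sum_add_distrib, sum_inner_grad_sub (gradω := gradω) hn, sum_const,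
          card_univ, Fintype.card_fin, nsmul_eq_mul, sub_add_cancel]

end FiniteSum

section Minimizers

variable {E : Type*} [NormedAddCommGroup E] [InnerProductSpace ℝ E]
  {f : E → ℝ} {gradf : E → E} {g h : E → EReal} {us xstar zs : E}

theorem ne_top_of_coe_add_add_ne_top {c : ℝ} {a b : EReal} (ha : a ≠ ⊥) (hb : b ≠ ⊥)
    (hab : (c : EReal) + a + b ≠ ⊤) : a ≠ ⊤ ∧ b ≠ ⊤ := by
  refine ⟨?_, ?_⟩
  · rintro rfl
    exact hab (by rw [EReal.coe_add_top, EReal.top_add_of_ne_bot hb])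
  · rintro rfl
    exact hab (EReal.add_top_of_ne_bot (by simp [ha]))

theorem bregmanDiv_nonpos_of_minimizer (hg : ProperConvex g) (hh : ProperConvex h)
    (hxstar : ∀ x, (f xstar : EReal) + g xstar + h xstar ≤ (f x : EReal) + g x + h x)
    (hgs : HasSubgradientAt g (-us - gradf zs) zs) (hhs : HasSubgradientAt h us zs) :
    bregmanDiv f gradf xstar zs ≤ 0 := by
  have hle := hxstar zs
  rw [← hg.coe_toReal hgs.1, ← hh.coe_toReal hhs.1] at hle
  obtain ⟨hgx, hhx⟩ := ne_top_of_coe_add_add_ne_top (hg.ne_bot xstar) (hh.ne_bot xstar)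
    (ne_top_of_le_ne_top (by norm_cast; exact EReal.coe_ne_top _) hle)
  rw [← hg.coe_toReal hgx, ← hh.coe_toReal hhx] at hle
  norm_cast at hle
  have hsubg := hgs.2 xstar hgx
  have hsubh := hhs.2 xstar hhx
  rw [inner_sub_left, inner_neg_left] at hsubg
  rw [bregmanDiv]
  linarith

theorem grad_eq_of_minimizer [CompleteSpace E] {n : ℕ} {ψ : Fin n → E → ℝ}
    {gradψ : Fin n → E → E} {ω : E → ℝ} {gradω : E → E} {Lψ Lω : ℝ}
    (hψ : ∀ i, SmoothConvex (ψ i) (gradψ i) Lψ) (hω : SmoothConvex ω gradω Lω)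
    (hL : 0 < Lψ + Lω) (hg : ProperConvex g) (hh : ProperConvex h)
    (hxstar : ∀ x, (finiteSum ψ ω xstar : EReal) + g xstar + h xstar
      ≤ (finiteSum ψ ω x : EReal) + g x + h x)
    (hgs : HasSubgradientAt g (-us - finiteSumGrad gradψ gradω zs) zs)
    (hhs : HasSubgradientAt h us zs) (i : Fin n) : gradψ i xstar = gradψ i zs := by
  have hn : 0 < n := i.pos
  have hD := bregmanDiv_nonpos_of_minimizer hg hh hxstar hgs hhs
  rw [bregmanDiv_finiteSum] at hD
  have hDψ : ∀ j ∈ univ, 0 ≤ bregmanDiv (ψ j) (gradψ j) xstar zs :=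
    fun j _ => (hψ j).bregmanDiv_nonneg _ _
  have hsum : ∑ j, bregmanDiv (ψ j) (gradψ j) xstar zs ≤ 0 :=
    nonpos_of_mul_nonpos_right (by linarith [hω.bregmanDiv_nonneg xstar zs])
      (by positivity : 0 < (n : ℝ)⁻¹)
  have hDi : bregmanDiv (ψ i) (gradψ i) xstar zs ≤ 0 :=
    (single_le_sum hDψ (mem_univ i)).trans hsum
  have hnorm := ((hψ i).weaken hω).norm_sub_sq_le_bregmanDiv hL xstar zs
  have hsq : ‖gradψ i xstar - gradψ i zs‖ ^ 2 ≤ 0 :=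
    hnorm.trans (mul_nonpos_of_nonneg_of_nonpos (by positivity) hDi)
  exact sub_eq_zero.1 (norm_eq_zero.1 (pow_eq_zero_iff two_ne_zero |>.1
    (hsq.antisymm (sq_nonneg _))))

end Minimizers

section SplittingStep

variable {E : Type*} [NormedAddCommGroup E] [InnerProductSpace ℝ E]

theorem norm_sub_sq_sub_norm_sub_sq {γ : ℝ} (hγ : γ ≠ 0) (x z u x' u' : E) :
    (2 * γ)⁻¹ * (‖z + γ • u - (x' + γ • u')‖ ^ 2 - ‖x + γ • u - (x' + γ • u')‖ ^ 2)
      = γ⁻¹ * ⟪x - z, x' - x⟫ + ⟪x - z, u' - u⟫ + (2 * γ)⁻¹ * ‖x - z‖ ^ 2 := by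
  have h := two_mul_inner_sub_sub (z + γ • u) (x + γ • u) (x' + γ • u')
  rw [add_sub_add_right_eq_sub, show x' + γ • u' - (x + γ • u) = (x' - x) + γ • (u' - u) by module,
    inner_add_right, real_inner_smul_right] at h
  rw [eq_add_of_sub_eq h.symm]
  field_simp

variable {f : E → ℝ} {gradf : E → E} {g h : E → EReal} {L γ : ℝ} {z u x v : E}

/-- The optimality conditions of the two proximal steps of an iteration of three operator splitting
at the point `z + γ u`, with gradient estimate `v`: `z` is the output of `prox_{γ h}`, `u` is the
dual iterate and `x` is the output of `prox_{γ g}`. The next point is `x + γ u`. -/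
structure IsSplittingStep (g h : E → EReal) (γ : ℝ) (z u x v : E) : Prop where
  hasSubgradientAt_left : HasSubgradientAt g (γ⁻¹ • (z - x) - u - v) x
  hasSubgradientAt_right : HasSubgradientAt h u z

theorem IsProxPoint.isSplittingStep {y : E} (hγ : 0 < γ) (hg : ProperConvex g)
    (hh : ProperConvex h) (hz : IsProxPoint γ h y z) (hx : IsProxPoint γ g (2 • z - y - γ • v) x) :
    IsSplittingStep g h γ z (γ⁻¹ • (y - z)) x v where
  hasSubgradientAt_left := by
    have hsub := hx.hasSubgradientAt hγ hg
    rwa [show 2 • z - y - γ • v - x = z - x - (y - z) - γ • v by module, smul_sub, smul_sub,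
      inv_smul_smul₀ hγ.ne'] at hsub
  hasSubgradientAt_right := hz.hasSubgradientAt hγ hh

theorem isSplittingStep_of_fixedPoint {proxg proxh : E → E} {ystar : E} (hγ : 0 < γ)
    (hg : ProperConvex g) (hh : ProperConvex h) (hproxg : ∀ x, IsProxPoint γ g x (proxg x))
    (hproxh : ∀ x, IsProxPoint γ h x (proxh x))
    (hfix : ystar - proxh ystar + proxg (2 • proxh ystar - ystar - γ • v) = ystar) :
    IsSplittingStep g h γ (proxh ystar) (γ⁻¹ • (ystar - proxh ystar)) (proxh ystar) v := by
  have hout : proxg (2 • proxh ystar - ystar - γ • v) = proxh ystar := by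
    rw [eq_sub_of_add_eq' hfix, sub_sub_cancel]
  have hx := hproxg (2 • proxh ystar - ystar - γ • v)
  rw [hout] at hx
  exact (hproxh ystar).isSplittingStep hγ hg hh hx

namespace IsSplittingStep

theorem lagrangianReal_sub_le [CompleteSpace E] (hf : SmoothConvex f gradf L) (hL : 0 < L)
    (hγ : 0 < γ) (hLγ : 3 * L * γ ≤ 1) (hh : ProperConvex h) (hs : IsSplittingStep g h γ z u x v)
    {x' u' : E} (hx' : g x' ≠ ⊤) (hu' : fenchelConj h u' ≠ ⊤) :
    lagrangianReal f g h x u' - lagrangianReal f g h x' u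
      ≤ (2 * γ)⁻¹ * (‖z + γ • u - (x' + γ • u')‖ ^ 2 - ‖x + γ • u - (x' + γ • u')‖ ^ 2)
        + ⟪gradf z - v, z - x'⟫ + (4 * L)⁻¹ * ‖gradf z - v‖ ^ 2 := by
  have hupper := hf.bregmanDiv_le x z
  have hlower := hf.bregmanDiv_nonneg x' z
  have hg := hs.hasSubgradientAt_left.2 x' hx'
  have hconj : (fenchelConj h u).toReal = ⟪z, u⟫ - (h z).toReal := by
    rw [hs.hasSubgradientAt_right.fenchelConj_eq hh, EReal.toReal_coe]
  have hyoung := inner_le_mul_norm_sq_add_mul_norm_sq hL (gradf z - v) (x - z)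
  have hfenchel := hh.inner_sub_le_toReal_fenchelConj hs.hasSubgradientAt_right.1 hu'
  have hstep : (L / 2 + L) * ‖x - z‖ ^ 2 ≤ (2 * γ)⁻¹ * ‖x - z‖ ^ 2 := by
    gcongr
    rw [le_inv_comm₀ (by positivity) (by positivity), ← one_div, le_div_iff₀ (by positivity)]
    linarith
  rw [norm_sub_sq_sub_norm_sub_sq hγ.ne']
  have hexpand : ⟪gradf z, x - z⟫ - ⟪gradf z, x' - z⟫ + (⟪x, u'⟫ - ⟪z, u'⟫) - (⟪x', u⟫ - ⟪z, u⟫)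
      - ⟪γ⁻¹ • (z - x) - u - v, x' - x⟫ = γ⁻¹ * ⟪x - z, x' - x⟫ + ⟪x - z, u' - u⟫
        + ⟪gradf z - v, z - x'⟫ + ⟪gradf z - v, x - z⟫ := by
    simp only [inner_sub_left, inner_sub_right, real_inner_smul_left, real_inner_comm x' u,
      real_inner_comm x u]
    ring
  rw [bregmanDiv] at hupper hlower
  rw [lagrangianReal, lagrangianReal, hconj]
  linarith

theorem inner_sub_le (hγ : 0 < γ) (hs : IsSplittingStep g h γ z u x v) {z' u' v' : E}
    (hs' : IsSplittingStep g h γ z' u' z' v') :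
    ⟪v - v', z - z'⟫ - γ / 2 * ‖v - v'‖ ^ 2
      ≤ (2 * γ)⁻¹ * (‖z + γ • u - (z' + γ • u')‖ ^ 2 - ‖x + γ • u - (z' + γ • u')‖ ^ 2) := by
  have hmonog := hs.hasSubgradientAt_left.inner_sub_nonneg hs'.hasSubgradientAt_left
  have hmonoh := hs.hasSubgradientAt_right.inner_sub_nonneg hs'.hasSubgradientAt_right
  have hyoung := inner_le_mul_norm_sq_add_mul_norm_sq (c := (2 * γ)⁻¹) (by positivity)
    (v - v') (z - x)
  rw [show 4 * (2 * γ)⁻¹ = (γ / 2)⁻¹ by field_simp; norm_num, inv_inv, norm_sub_rev z] at hyoung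
  rw [norm_sub_sq_sub_norm_sub_sq hγ.ne']
  have hexpand : ⟪γ⁻¹ • (z - x) - u - v - (γ⁻¹ • (z' - z') - u' - v'), x - z'⟫ + ⟪u - u', z - z'⟫
      = γ⁻¹ * ⟪x - z, z' - x⟫ + ⟪x - z, u' - u⟫ - ⟪v - v', z - z'⟫ + ⟪v - v', z - x⟫ := by
    simp only [sub_self, smul_zero, zero_sub, inner_sub_left, inner_sub_right, inner_neg_left,
      real_inner_smul_left, real_inner_comm x u, real_inner_comm x u', real_inner_comm z u,
      real_inner_comm z u']
    ring
  linarith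

end IsSplittingStep

end SplittingStep

section Estimator

variable {E : Type*} [NormedAddCommGroup E] [InnerProductSpace ℝ E] {n : ℕ}

/-- The variance-reduced estimate of `finiteSumGrad gradψ gradω z` from the memory `a` and the
sampled index `i`. -/
def vrGrad (gradψ : Fin n → E → E) (gradω : E → E) (a : Fin n → E) (z : E) (i : Fin n) : E :=
  gradψ i z - a i + (n : ℝ)⁻¹ • ∑ j, a j + gradω z

theorem sum_sub_average_eq_zero (hn : 0 < n) (b : Fin n → E) :
    ∑ i, (b i - (n : ℝ)⁻¹ • ∑ j, b j) = 0 := by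
  rw [sum_sub_distrib, sum_const, card_univ, Fintype.card_fin, ← Nat.cast_smul_eq_nsmul ℝ,
    smul_inv_smul₀ (by positivity), sub_self]

theorem sum_norm_sub_average_sq_le (hn : 0 < n) (b : Fin n → E) :
    ∑ i, ‖b i - (n : ℝ)⁻¹ • ∑ j, b j‖ ^ 2 ≤ ∑ i, ‖b i‖ ^ 2 :=
  sum_norm_sub_sq_le_of_sum_sub_eq_zero (sum_sub_average_eq_zero hn b)

variable (gradψ : Fin n → E → E) (gradω : E → E) (a : Fin n → E) (z zs : E)

theorem finiteSumGrad_sub_vrGrad (i : Fin n) :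
    finiteSumGrad gradψ gradω z - vrGrad gradψ gradω a z i
      = (a i - gradψ i z) - (n : ℝ)⁻¹ • ∑ j, (a j - gradψ j z) := by
  rw [finiteSumGrad, vrGrad, sum_sub_distrib, smul_sub]
  abel

theorem vrGrad_sub_finiteSumGrad (i : Fin n) :
    vrGrad gradψ gradω a z i - finiteSumGrad gradψ gradω zs
      = ((gradψ i z + gradω z) - (gradψ i zs + gradω zs))
        - ((a i - gradψ i zs) - (n : ℝ)⁻¹ • ∑ j, (a j - gradψ j zs)) := by
  rw [finiteSumGrad, vrGrad, sum_sub_distrib, smul_sub]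
  abel

theorem sum_finiteSumGrad_sub_vrGrad (hn : 0 < n) :
    ∑ i, (finiteSumGrad gradψ gradω z - vrGrad gradψ gradω a z i) = 0 := by
  simp only [finiteSumGrad_sub_vrGrad, sum_sub_average_eq_zero hn]

theorem sum_norm_finiteSumGrad_sub_vrGrad_sq_le (hn : 0 < n) :
    ∑ i, ‖finiteSumGrad gradψ gradω z - vrGrad gradψ gradω a z i‖ ^ 2
      ≤ 2 * ∑ i, ‖a i - gradψ i zs‖ ^ 2 + 2 * ∑ i, ‖gradψ i z - gradψ i zs‖ ^ 2 := by
  simp only [finiteSumGrad_sub_vrGrad]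
  refine (sum_norm_sub_average_sq_le hn _).trans ?_
  rw [mul_sum, mul_sum, ← sum_add_distrib]
  refine sum_le_sum fun i _ => ?_
  rw [← sub_sub_sub_cancel_right (a i) (gradψ i z) (gradψ i zs)]
  exact norm_sub_sq_le_two_mul _ _

theorem sum_norm_vrGrad_sub_finiteSumGrad_sq_le (hn : 0 < n) :
    ∑ i, ‖vrGrad gradψ gradω a z i - finiteSumGrad gradψ gradω zs‖ ^ 2
      ≤ 2 * ∑ i, ‖(gradψ i z + gradω z) - (gradψ i zs + gradω zs)‖ ^ 2
        + 2 * ∑ i, ‖a i - gradψ i zs‖ ^ 2 := by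
  calc _ ≤ ∑ i, (2 * ‖(gradψ i z + gradω z) - (gradψ i zs + gradω zs)‖ ^ 2
        + 2 * ‖(a i - gradψ i zs) - (n : ℝ)⁻¹ • ∑ j, (a j - gradψ j zs)‖ ^ 2) :=
        sum_le_sum fun i _ => by
          rw [vrGrad_sub_finiteSumGrad]
          exact norm_sub_sq_le_two_mul _ _
    _ ≤ _ := by
        rw [sum_add_distrib, ← mul_sum, ← mul_sum]
        gcongr _ + 2 * ?_
        exact sum_norm_sub_average_sq_le hn _

theorem sum_inner_vrGrad_sub_finiteSumGrad (hn : 0 < n) (d : E) :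
    ∑ i, ⟪vrGrad gradψ gradω a z i - finiteSumGrad gradψ gradω zs, d⟫
      = n * ⟪finiteSumGrad gradψ gradω z - finiteSumGrad gradψ gradω zs, d⟫ := by
  calc _ = ∑ i, (⟪finiteSumGrad gradψ gradω z - finiteSumGrad gradψ gradω zs, d⟫
        - ⟪finiteSumGrad gradψ gradω z - vrGrad gradψ gradω a z i, d⟫) :=
        sum_congr rfl fun i _ => by rw [← inner_sub_left, sub_sub_sub_cancel_left]
    _ = _ := by
        rw [sum_sub_distrib, sum_const, ← sum_inner univ _ d,
          sum_finiteSumGrad_sub_vrGrad _ _ _ _ hn, inner_zero_left, sub_zero, card_univ,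
          Fintype.card_fin, nsmul_eq_mul]

/-- What the two estimates for a splitting step with gradient estimate `v` leave over besides
squared distances, when the second one is taken with weight `10`; `G` is the exact gradient, `zs` a
solution and `x'` the point to which the primal iterate is compared. -/
def stepError (L γ : ℝ) (G : E → E) (z zs x' v : E) : ℝ :=
  ⟪G z - v, z - x'⟫ + (4 * L)⁻¹ * ‖G z - v‖ ^ 2
    - 10 * (⟪v - G zs, z - zs⟫ - γ / 2 * ‖v - G zs‖ ^ 2)

theorem sum_stepError_le [CompleteSpace E] {ψ : Fin n → E → ℝ} {ω : E → ℝ} {Lψ Lω γ : ℝ}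
    (hn : 0 < n) (hψ : ∀ i, SmoothConvex (ψ i) (gradψ i) Lψ) (hω : SmoothConvex ω gradω Lω)
    (hL : 0 < Lψ + Lω) (hLγ : 3 * (Lψ + Lω) * γ ≤ 1) (x' : E) :
    ∑ i, stepError (Lψ + Lω) γ (finiteSumGrad gradψ gradω) z zs x' (vrGrad gradψ gradω a z i)
      ≤ 5 / (Lψ + Lω) * (∑ i, ‖a i - gradψ i zs‖ ^ 2 - ∑ i, ‖gradψ i z - gradψ i zs‖ ^ 2) := by
  have hzero : ∑ i, ⟪finiteSumGrad gradψ gradω z - vrGrad gradψ gradω a z i, z - x'⟫ = 0 := by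
    rw [← sum_inner, sum_finiteSumGrad_sub_vrGrad gradψ gradω a z hn, inner_zero_left]
  have hmean := sum_inner_vrGrad_sub_finiteSumGrad gradψ gradω a z zs hn (z - zs)
  have hvar := sum_norm_finiteSumGrad_sub_vrGrad_sq_le gradψ gradω a z zs hn
  have hvars := sum_norm_vrGrad_sub_finiteSumGrad_sq_le gradψ gradω a z zs hn
  have hψsum := sum_norm_grad_sub_sq_le hn hψ hω hL z zs
  have hψωsum := sum_norm_grad_add_sub_sq_le hn hψ hω hL z zs
  have hH : 0 ≤ ∑ i, ‖a i - gradψ i zs‖ ^ 2 := by positivity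
  have hG : 0 ≤ ∑ i, ‖gradψ i z - gradψ i zs‖ ^ 2 := by positivity
  have hscale := mul_le_mul_of_nonneg_right hLγ
    (by positivity :
      0 ≤ ∑ i, ‖vrGrad gradψ gradω a z i - finiteSumGrad gradψ gradω zs‖ ^ 2)
  simp only [stepError, sum_sub_distrib, sum_add_distrib, ← mul_sum, hzero, hmean]
  generalize Lψ + Lω = L at *
  refine le_of_mul_le_mul_left ?_ hL
  rw [zero_add, mul_sub, mul_inv_rev, mul_assoc, mul_inv_cancel_left₀ hL.ne', ← mul_assoc L (5 / L),
    mul_div_cancel₀ _ hL.ne']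
  linarith

end Estimator

section Sampling

/-- The distribution `w` of a draw `s`, which determines the sampled index `sel s` and the set
`upd s` of the indices whose memory is updated: `sel s` is uniform and every index has probability
`q / n` of being updated. -/
structure IsUniformSampling {S : Type*} [Fintype S] {n : ℕ} (w : S → ℝ) (sel : S → Fin n)
    (upd : S → Finset (Fin n)) (q : ℝ) : Prop where
  nonneg : ∀ s, 0 ≤ w s
  sum_eq_one : ∑ s, w s = 1
  sum_sel : ∀ i, ∑ s with sel s = i, w s = 1 / n
  sum_upd : ∀ j, ∑ s with j ∈ upd s, w s = q / n

namespace IsUniformSampling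

variable {S : Type*} [Fintype S] {n : ℕ} {w : S → ℝ} {sel : S → Fin n}
  {upd : S → Finset (Fin n)} {q : ℝ}

theorem pos (hw : IsUniformSampling w sel upd q) : 0 < n := by
  obtain ⟨s, -⟩ := exists_ne_zero_of_sum_ne_zero (hw.sum_eq_one ▸ one_ne_zero)
  exact (sel s).pos

theorem sum_mul_sel (hw : IsUniformSampling w sel upd q) (φ : Fin n → ℝ) :
    ∑ s, w s * φ (sel s) = (n : ℝ)⁻¹ * ∑ i, φ i := by
  rw [← sum_fiberwise univ sel, mul_sum]
  refine sum_congr rfl fun i _ => ?_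
  rw [← one_div, ← hw.sum_sel i, sum_mul]
  exact sum_congr rfl fun s hs => by rw [(mem_filter.1 hs).2]

theorem sum_mul_const (hw : IsUniformSampling w sel upd q) (c : ℝ) : ∑ s, w s * c = c := by
  rw [← sum_mul, hw.sum_eq_one, one_mul]

theorem sum_mul_ite (hw : IsUniformSampling w sel upd q) (j : Fin n) (A B : ℝ) :
    ∑ s, w s * (if j ∈ upd s then A else B) = q / n * A + (1 - q / n) * B := by
  calc ∑ s, w s * (if j ∈ upd s then A else B)
      = ∑ s, ((if j ∈ upd s then w s else 0) * (A - B) + w s * B) :=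
        sum_congr rfl fun s _ => by split_ifs <;> ring
    _ = q / n * A + (1 - q / n) * B := by
        rw [sum_add_distrib, ← sum_mul, ← sum_filter, hw.sum_upd, hw.sum_mul_const]
        ring

end IsUniformSampling

variable {E : Type*} [NormedAddCommGroup E] {n : ℕ}

/-- The memory after the gradients at `z` with index in `J` have been stored in `a`. -/
def memoryUpdate (gradψ : Fin n → E → E) (J : Finset (Fin n)) (a : Fin n → E) (z : E)
    (j : Fin n) : E :=
  if j ∈ J then gradψ j z else a j

/-- The Lyapunov function of the method at the point `y` with memory `a`: the weighted distances to
the comparison point `y'` and to the fixed point `ystar`, and the error of the memory with respect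
to the gradients at the solution `zs`. -/
def lyapunov (γ L q : ℝ) (gradψ : Fin n → E → E) (y' ystar zs y : E) (a : Fin n → E) : ℝ :=
  (2 * γ)⁻¹ * ‖y - y'‖ ^ 2 + 10 * ((2 * γ)⁻¹ * ‖y - ystar‖ ^ 2)
    + 5 / (q * L) * ∑ i, ‖a i - gradψ i zs‖ ^ 2

theorem lyapunov_nonneg {γ L q : ℝ} (hγ : 0 < γ) (hL : 0 < L) (hq : 0 < q)
    (gradψ : Fin n → E → E) (y' ystar zs y : E) (a : Fin n → E) :
    0 ≤ lyapunov γ L q gradψ y' ystar zs y a := by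
  rw [lyapunov]
  positivity

variable {S : Type*} [Fintype S] {w : S → ℝ} {sel : S → Fin n} {upd : S → Finset (Fin n)} {q : ℝ}

theorem IsUniformSampling.sum_mul_memoryUpdate (hw : IsUniformSampling w sel upd q)
    (gradψ : Fin n → E → E) (a : Fin n → E) (z zs : E) :
    ∑ s, w s * ∑ j, ‖memoryUpdate gradψ (upd s) a z j - gradψ j zs‖ ^ 2
      = q / n * ∑ j, ‖gradψ j z - gradψ j zs‖ ^ 2
        + (1 - q / n) * ∑ j, ‖a j - gradψ j zs‖ ^ 2 := by
  simp only [mul_sum]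
  rw [sum_comm, ← sum_add_distrib]
  refine sum_congr rfl fun j _ => ?_
  rw [← hw.sum_mul_ite j]
  exact sum_congr rfl fun s _ => by rw [memoryUpdate]; split_ifs <;> rfl

variable [InnerProductSpace ℝ E] [CompleteSpace E] {g h : E → EReal} {γ : ℝ}

theorem IsSplittingStep.lagrangianReal_sub_add_le {f : E → ℝ} {gradf : E → E} {L : ℝ}
    {z u x v zs us x' u' : E} (hf : SmoothConvex f gradf L) (hL : 0 < L) (hγ : 0 < γ)
    (hLγ : 3 * L * γ ≤ 1) (hh : ProperConvex h) (hs : IsSplittingStep g h γ z u x v)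
    (hstar : IsSplittingStep g h γ zs us zs (gradf zs)) (hx' : g x' ≠ ⊤)
    (hu' : fenchelConj h u' ≠ ⊤) (gradψ : Fin n → E → E) (a a' : Fin n → E) (q : ℝ) :
    lagrangianReal f g h x u' - lagrangianReal f g h x' u
        + lyapunov γ L q gradψ (x' + γ • u') (zs + γ • us) zs (x + γ • u) a'
      ≤ lyapunov γ L q gradψ (x' + γ • u') (zs + γ • us) zs (z + γ • u) a
        + stepError L γ gradf z zs x' v
        + 5 / (q * L) * (∑ i, ‖a' i - gradψ i zs‖ ^ 2 - ∑ i, ‖a i - gradψ i zs‖ ^ 2) := by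
  have hgap := hs.lagrangianReal_sub_le hf hL hγ hLγ hh hx' hu'
  have hdist := hs.inner_sub_le hγ hstar
  rw [lyapunov, lyapunov, stepError]
  linarith

variable {ψ : Fin n → E → ℝ} {gradψ : Fin n → E → E} {ω : E → ℝ} {gradω : E → E} {Lψ Lω : ℝ}

theorem IsUniformSampling.sum_mul_lagrangianReal_sub_add_lyapunov_le
    (hw : IsUniformSampling w sel upd q) (hψ : ∀ i, SmoothConvex (ψ i) (gradψ i) Lψ)
    (hω : SmoothConvex ω gradω Lω) (hq : 0 < q) (hL : 0 < Lψ + Lω) (hγ : 0 < γ)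
    (hLγ : 3 * (Lψ + Lω) * γ ≤ 1) (hh : ProperConvex h) {z u zs us x' u' : E} {x : S → E}
    {a : Fin n → E}
    (hs : ∀ s, IsSplittingStep g h γ z u (x s) (vrGrad gradψ gradω a z (sel s)))
    (hstar : IsSplittingStep g h γ zs us zs (finiteSumGrad gradψ gradω zs))
    (hx' : g x' ≠ ⊤) (hu' : fenchelConj h u' ≠ ⊤) :
    ∑ s, w s * (lagrangianReal (finiteSum ψ ω) g h (x s) u'
          - lagrangianReal (finiteSum ψ ω) g h x' u
        + lyapunov γ (Lψ + Lω) q gradψ (x' + γ • u') (zs + γ • us) zs (x s + γ • u)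
          (memoryUpdate gradψ (upd s) a z))
      ≤ lyapunov γ (Lψ + Lω) q gradψ (x' + γ • u') (zs + γ • us) zs (z + γ • u) a := by
  have hn := hw.pos
  have hf := smoothConvex_finiteSum hn hψ hω
  have herror := sum_stepError_le gradψ gradω a z zs hn hψ hω hL hLγ x'
  calc _ ≤ _ := sum_le_sum fun s _ => mul_le_mul_of_nonneg_left
        ((hs s).lagrangianReal_sub_add_le hf hL hγ hLγ hh hstar hx' hu' gradψ a _ q) (hw.nonneg s)
    _ = lyapunov γ (Lψ + Lω) q gradψ (x' + γ • u') (zs + γ • us) zs (z + γ • u) a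
        + (n : ℝ)⁻¹ * ∑ i, stepError (Lψ + Lω) γ (finiteSumGrad gradψ gradω) z zs x'
          (vrGrad gradψ gradω a z i)
        + 5 / (q * (Lψ + Lω)) * (∑ s, w s * ∑ i, ‖memoryUpdate gradψ (upd s) a z i
          - gradψ i zs‖ ^ 2 - ∑ i, ‖a i - gradψ i zs‖ ^ 2) := by
        simp only [mul_add (w _), mul_sub (w _), sum_add_distrib, sum_sub_distrib, ← mul_sum,
          mul_left_comm (w _) (5 / (q * (Lψ + Lω))), hw.sum_mul_const,
          hw.sum_mul_sel fun i => stepError (Lψ + Lω) γ (finiteSumGrad gradψ gradω) z zs x'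
            (vrGrad gradψ gradω a z i)]
    _ = lyapunov γ (Lψ + Lω) q gradψ (x' + γ • u') (zs + γ • us) zs (z + γ • u) a
        + (n : ℝ)⁻¹ * (∑ i, stepError (Lψ + Lω) γ (finiteSumGrad gradψ gradω) z zs x'
            (vrGrad gradψ gradω a z i)
          - 5 / (Lψ + Lω)
            * (∑ i, ‖a i - gradψ i zs‖ ^ 2 - ∑ i, ‖gradψ i z - gradψ i zs‖ ^ 2)) := by
        rw [hw.sum_mul_memoryUpdate]
        field_simp
        ring
    _ ≤ _ := add_le_of_nonpos_right
        (mul_nonpos_of_nonneg_of_nonpos (by positivity) (sub_nonpos.2 herror))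

end Sampling

section Draws

variable {S : Type}

theorem extSeq_update [Inhabited S] {T : ℕ} (v : Fin T → S) (k : Fin T) (s : S) :
    extSeq T (Function.update v k s) = Function.update (extSeq T v) k s := by
  funext m
  rcases lt_or_ge m T with hm | hm
  · by_cases hk : m = k
    · subst hk
      simp [extSeq]
    · simp [extSeq, hm, hk, Fin.ext_iff]
  · simp [extSeq, hm.not_gt, (k.2.trans_le hm).ne']

variable [Fintype S] {w : S → ℝ} {T : ℕ}

theorem prodW_nonneg (hw : ∀ s, 0 ≤ w s) (v : Fin T → S) : 0 ≤ prodW w T v :=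
  prod_nonneg fun _ _ => hw _

theorem sum_prodW (hw : ∑ s, w s = 1) (T : ℕ) : ∑ v, prodW w T v = 1 := by
  simpa [prodW, hw] using (prod_univ_sum (fun _ : Fin T => (univ : Finset S)) fun _ s => w s).symm

theorem prodW_update_mul (v : Fin T → S) (k : Fin T) (s : S) :
    prodW w T (Function.update v k s) * w (v k) = prodW w T v * w s := by
  have hrest : ∏ j ∈ univ.erase k, w (Function.update v k s j) = ∏ j ∈ univ.erase k, w (v j) :=
    prod_congr rfl fun j hj => by rw [Function.update_of_ne (ne_of_mem_erase hj)]
  rw [prodW, prodW, ← mul_prod_erase univ _ (mem_univ k), ← mul_prod_erase univ _ (mem_univ k),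
    hrest, Function.update_self]
  ring

theorem sum_prodW_mul_sum_update (hw : ∑ s, w s = 1) (k : Fin T) (F : (Fin T → S) → ℝ) :
    ∑ v, prodW w T v * ∑ s, w s * F (Function.update v k s) = ∑ v, prodW w T v * F v := by
  -- Exchanging the `k`-th draw with the fresh draw `s` preserves the product weights.
  have hinv : Function.Involutive fun vs : (Fin T → S) × S =>
      (Function.update vs.1 k vs.2, vs.1 k) := fun vs => by simp
  calc ∑ v, prodW w T v * ∑ s, w s * F (Function.update v k s)
      = ∑ vs : (Fin T → S) × S, prodW w T vs.1 * w vs.2 * F (Function.update vs.1 k vs.2) := by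
        simp only [Fintype.sum_prod_type, mul_sum, mul_assoc]
    _ = ∑ vs : (Fin T → S) × S, prodW w T vs.1 * w vs.2 * F vs.1 :=
        Fintype.sum_equiv hinv.toPerm _ _ fun vs => by
          rw [← prodW_update_mul]
          rfl
    _ = ∑ v, prodW w T v * F v := by
        simp only [Fintype.sum_prod_type, ← sum_mul, ← mul_sum, hw, mul_one]

variable [Inhabited S]

/-- The expectation over `T` independent draws with weights `w`, of functions of the sequence of
draws. -/
def drawExpectation (w : S → ℝ) (T : ℕ) : ((ℕ → S) → ℝ) →ₗ[ℝ] ℝ :=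
  ∑ v : Fin T → S, prodW w T v • LinearMap.proj (extSeq T v)

theorem drawExpectation_apply (F : (ℕ → S) → ℝ) :
    drawExpectation w T F = ∑ v, prodW w T v * F (extSeq T v) := by
  simp [drawExpectation]

theorem coe_drawExpectation (F : (ℕ → S) → ℝ) : (drawExpectation w T F : EReal)
    = ∑ v, (prodW w T v : EReal) * (F (extSeq T v) : EReal) := by
  have hcoe : ∀ (s : Finset (Fin T → S)) (f : (Fin T → S) → ℝ),
      ((∑ v ∈ s, f v : ℝ) : EReal) = ∑ v ∈ s, (f v : EReal) := fun s f =>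
    map_sum (⟨⟨Real.toEReal, EReal.coe_zero⟩, EReal.coe_add⟩ : ℝ →+ EReal) f s
  simp only [drawExpectation_apply, hcoe, EReal.coe_mul]

theorem drawExpectation_mono (hw : ∀ s, 0 ≤ w s) {F F' : (ℕ → S) → ℝ} (hF : ∀ r, F r ≤ F' r) :
    drawExpectation w T F ≤ drawExpectation w T F' := by
  rw [drawExpectation_apply, drawExpectation_apply]
  exact sum_le_sum fun v _ => mul_le_mul_of_nonneg_left (hF _) (prodW_nonneg hw v)

theorem drawExpectation_const (hw : ∑ s, w s = 1) (c : ℝ) :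
    drawExpectation w T (fun _ => c) = c := by
  rw [drawExpectation_apply, ← sum_mul, sum_prodW hw, one_mul]

theorem drawExpectation_resample (hw : ∑ s, w s = 1) {k : ℕ} (hk : k < T) (F : (ℕ → S) → ℝ) :
    drawExpectation w T (fun r => ∑ s, w s * F (Function.update r k s))
      = drawExpectation w T F := by
  simpa only [drawExpectation_apply, extSeq_update] using
    sum_prodW_mul_sum_update hw ⟨k, hk⟩ fun v => F (extSeq T v)

theorem drawExpectation_ergodicMean_le (hw : ∀ s, 0 ≤ w s) (hw₁ : ∑ s, w s = 1)
    {gap V : ℕ → (ℕ → S) → ℝ} (hV : ∀ k r, 0 ≤ V k r)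
    (hstep : ∀ k r, ∑ s, w s * (gap k (Function.update r k s) + V (k + 1) (Function.update r k s))
      ≤ V k r) (t : ℕ) :
    drawExpectation w (t + 1) (ergodicMean gap t)
      ≤ ((t : ℝ) + 1)⁻¹ * drawExpectation w (t + 1) (V 0) := by
  have hdescent : ∀ k ∈ range (t + 1), drawExpectation w (t + 1) (gap k)
      ≤ drawExpectation w (t + 1) (V k) - drawExpectation w (t + 1) (V (k + 1)) := by
    intro k hk
    rw [le_sub_iff_add_le, ← map_add, ← drawExpectation_resample hw₁ (mem_range.1 hk)]
    exact drawExpectation_mono hw (hstep k)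
  have hlast : 0 ≤ drawExpectation w (t + 1) (V (t + 1)) := by
    rw [← drawExpectation_const (T := t + 1) hw₁ 0]
    exact drawExpectation_mono hw (hV (t + 1))
  rw [ergodicMean, map_smul, map_sum, smul_eq_mul]
  gcongr
  calc _ ≤ _ := sum_le_sum hdescent
    _ = _ := sum_range_sub' _ _
    _ ≤ _ := sub_le_self _ hlast

end Draws

section Iterates

variable {E : Type*} [NormedAddCommGroup E] [InnerProductSpace ℝ E] {S : Type*} {n : ℕ}

/-- The iterates of VR-TOS with uniform memorization, as functions of the sequence `r` of draws:
`r k` determines the index `sel (r k)` sampled and the indices `upd (r k)` memorized at time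
`k`. -/
structure IsVRTOSRun (gradψ : Fin n → E → E) (gradω proxg proxh : E → E) (γ : ℝ)
    (sel : S → Fin n) (upd : S → Finset (Fin n)) (y0 : E) (α0 : Fin n → E)
    (y z x : ℕ → (ℕ → S) → E) (α : ℕ → (ℕ → S) → Fin n → E) : Prop where
  y_zero : ∀ r, y 0 r = y0
  α_zero : ∀ r, α 0 r = α0
  z_eq : ∀ k r, z k r = proxh (y k r)
  x_eq : ∀ k r, x k r = proxg (2 • z k r - y k r
    - γ • vrGrad gradψ gradω (α k r) (z k r) (sel (r k)))
  y_succ : ∀ k r, y (k + 1) r = y k r + x k r - z k r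
  α_succ : ∀ k r, α (k + 1) r = memoryUpdate gradψ (upd (r k)) (α k r) (z k r)

namespace IsVRTOSRun

variable {gradψ : Fin n → E → E} {gradω proxg proxh : E → E} {γ : ℝ} {sel : S → Fin n}
  {upd : S → Finset (Fin n)} {y0 : E} {α0 : Fin n → E} {y z x : ℕ → (ℕ → S) → E}
  {α : ℕ → (ℕ → S) → Fin n → E}

theorem update_eq (hrun : IsVRTOSRun gradψ gradω proxg proxh γ sel upd y0 α0 y z x α)
    {k m : ℕ} (hkm : k ≤ m) (r : ℕ → S) (s : S) :
    y k (Function.update r m s) = y k r ∧ α k (Function.update r m s) = α k r := by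
  induction k with
  | zero => simp only [hrun.y_zero, hrun.α_zero, and_self]
  | succ k ih =>
    obtain ⟨hy, hα⟩ := ih (Nat.le_of_succ_le hkm)
    have hr : Function.update r m s k = r k := Function.update_of_ne (Nat.ne_of_lt hkm) _ _
    simp only [hrun.y_succ, hrun.α_succ, hrun.x_eq, hrun.z_eq, hy, hα, hr, and_self]

theorem isSplittingStep (hrun : IsVRTOSRun gradψ gradω proxg proxh γ sel upd y0 α0 y z x α)
    {g h : E → EReal} (hγ : 0 < γ) (hg : ProperConvex g) (hh : ProperConvex h)
    (hproxg : ∀ x, IsProxPoint γ g x (proxg x)) (hproxh : ∀ x, IsProxPoint γ h x (proxh x))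
    (k : ℕ) (r : ℕ → S) :
    IsSplittingStep g h γ (z k r) (γ⁻¹ • (y k r - z k r)) (x k r)
      (vrGrad gradψ gradω (α k r) (z k r) (sel (r k))) :=
  IsProxPoint.isSplittingStep hγ hg hh (hrun.z_eq k r ▸ hproxh _) (hrun.x_eq k r ▸ hproxg _)

theorem ne_top (hrun : IsVRTOSRun gradψ gradω proxg proxh γ sel upd y0 α0 y z x α)
    {g h : E → EReal} (hγ : 0 < γ) (hg : ProperConvex g) (hh : ProperConvex h)
    (hproxg : ∀ x, IsProxPoint γ g x (proxg x)) (hproxh : ∀ x, IsProxPoint γ h x (proxh x))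
    (k : ℕ) (r : ℕ → S) : g (x k r) ≠ ⊤ ∧ fenchelConj h (γ⁻¹ • (y k r - z k r)) ≠ ⊤ := by
  have hs := hrun.isSplittingStep hγ hg hh hproxg hproxh k r
  exact ⟨hs.hasSubgradientAt_left.1,
    hs.hasSubgradientAt_right.fenchelConj_eq hh ▸ EReal.coe_ne_top _⟩

theorem sum_mul_lagrangianReal_sub_add_lyapunov_le [CompleteSpace E] [Fintype S] {w : S → ℝ}
    {q : ℝ} {ψ : Fin n → E → ℝ} {ω : E → ℝ} {Lψ Lω : ℝ} {g h : E → EReal}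
    (hrun : IsVRTOSRun gradψ gradω proxg proxh γ sel upd y0 α0 y z x α)
    (hw : IsUniformSampling w sel upd q) (hψ : ∀ i, SmoothConvex (ψ i) (gradψ i) Lψ)
    (hω : SmoothConvex ω gradω Lω) (hq : 0 < q) (hL : 0 < Lψ + Lω) (hγ : 0 < γ)
    (hLγ : 3 * (Lψ + Lω) * γ ≤ 1) (hg : ProperConvex g) (hh : ProperConvex h)
    (hproxg : ∀ x, IsProxPoint γ g x (proxg x)) (hproxh : ∀ x, IsProxPoint γ h x (proxh x))
    {zs us x' u' : E} (hstar : IsSplittingStep g h γ zs us zs (finiteSumGrad gradψ gradω zs))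
    (hx' : g x' ≠ ⊤) (hu' : fenchelConj h u' ≠ ⊤) (k : ℕ) (r : ℕ → S) :
    ∑ s, w s * (lagrangianReal (finiteSum ψ ω) g h (x k (Function.update r k s)) u'
          - lagrangianReal (finiteSum ψ ω) g h x'
            (γ⁻¹ • (y k (Function.update r k s) - z k (Function.update r k s)))
        + lyapunov γ (Lψ + Lω) q gradψ (x' + γ • u') (zs + γ • us) zs
          (y (k + 1) (Function.update r k s)) (α (k + 1) (Function.update r k s)))
      ≤ lyapunov γ (Lψ + Lω) q gradψ (x' + γ • u') (zs + γ • us) zs (y k r) (α k r) := by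
  have hy : ∀ s, y k (Function.update r k s) = y k r := fun s => (hrun.update_eq le_rfl r s).1
  have hα : ∀ s, α k (Function.update r k s) = α k r := fun s => (hrun.update_eq le_rfl r s).2
  have hz : ∀ s, z k (Function.update r k s) = z k r := fun s => by rw [hrun.z_eq, hrun.z_eq, hy]
  have hs : ∀ s, IsSplittingStep g h γ (z k r) (γ⁻¹ • (y k r - z k r))
      (x k (Function.update r k s)) (vrGrad gradψ gradω (α k r) (z k r) (sel s)) := fun s => by
    have hstep := hrun.isSplittingStep hγ hg hh hproxg hproxh k (Function.update r k s)
    rwa [hy, hα, hz, Function.update_self] at hstep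
  have hynow : z k r + γ • γ⁻¹ • (y k r - z k r) = y k r := by
    rw [smul_inv_smul₀ hγ.ne', add_sub_cancel]
  have hynext : ∀ s, x k (Function.update r k s) + γ • γ⁻¹ • (y k r - z k r)
      = y (k + 1) (Function.update r k s) := fun s => by
    rw [smul_inv_smul₀ hγ.ne', hrun.y_succ, hy, hz]
    abel
  have hdescent := hw.sum_mul_lagrangianReal_sub_add_lyapunov_le hψ hω hq hL hγ hLγ hh hs hstar
    hx' hu'
  simpa only [hynow, hynext, hrun.α_succ, hy, hα, hz, Function.update_self] using hdescent

end IsVRTOSRun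

end Iterates

section Expectation

variable {E : Type*} [NormedAddCommGroup E] [InnerProductSpace ℝ E] {n : ℕ}
  {gradψ : Fin n → E → E} {gradω proxg proxh : E → E} {γ : ℝ} {S : Type} [Fintype S] [Inhabited S]
  {w : S → ℝ} {sel : S → Fin n} {upd : S → Finset (Fin n)} {y0 : E} {α0 : Fin n → E}
  {y z x : ℕ → (ℕ → S) → E} {α : ℕ → (ℕ → S) → Fin n → E} {g h : E → EReal} {x' u' : E}

namespace IsVRTOSRun

theorem coe_drawExpectation_lagrangianReal_sub
    (hrun : IsVRTOSRun gradψ gradω proxg proxh γ sel upd y0 α0 y z x α)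
    (hγ : 0 < γ) (hg : ProperConvex g) (hh : ProperConvex h)
    (hproxg : ∀ x, IsProxPoint γ g x (proxg x)) (hproxh : ∀ x, IsProxPoint γ h x (proxh x))
    (hx' : g x' ≠ ⊤) (hu' : fenchelConj h u' ≠ ⊤) (f : E → ℝ) (w : S → ℝ) (t : ℕ) :
    ((drawExpectation w (t + 1) fun r =>
        lagrangianReal f g h (ergodicMean (fun k => x k r) t) u'
          - lagrangianReal f g h x' (ergodicMean (fun k => γ⁻¹ • (y k r - z k r)) t) : ℝ) : EReal)
      = ∑ r : Fin (t + 1) → S, (prodW w (t + 1) r : EReal)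
        * (lagrangian f g h (ergodicMean (fun k => x k (extSeq (t + 1) r)) t) u'
          - lagrangian f g h x' (ergodicMean
            (fun k => γ⁻¹ • (y k (extSeq (t + 1) r) - z k (extSeq (t + 1) r))) t)) := by
  have hdom := hrun.ne_top hγ hg hh hproxg hproxh
  rw [coe_drawExpectation]
  refine sum_congr rfl fun v _ => ?_
  rw [EReal.coe_sub, coe_lagrangianReal hg hh _ hu', coe_lagrangianReal hg hh hx']
  · exact ergodicMean_mem hh.convexOn_toReal_fenchelConj.1 fun k => (hdom k _).2
  · exact ergodicMean_mem hg.convexOn_toReal.1 fun k => (hdom k _).1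

theorem drawExpectation_lagrangianReal_sub_le [CompleteSpace E] {q : ℝ} {ψ : Fin n → E → ℝ}
    {ω : E → ℝ} {Lψ Lω : ℝ}
    (hrun : IsVRTOSRun gradψ gradω proxg proxh γ sel upd y0 α0 y z x α)
    (hw : IsUniformSampling w sel upd q) (hψ : ∀ i, SmoothConvex (ψ i) (gradψ i) Lψ)
    (hω : SmoothConvex ω gradω Lω) (hq : 0 < q) (hL : 0 < Lψ + Lω) (hγ : 0 < γ)
    (hLγ : 3 * (Lψ + Lω) * γ ≤ 1) (hg : ProperConvex g) (hh : ProperConvex h)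
    (hproxg : ∀ x, IsProxPoint γ g x (proxg x)) (hproxh : ∀ x, IsProxPoint γ h x (proxh x))
    {zs us : E} (hstar : IsSplittingStep g h γ zs us zs (finiteSumGrad gradψ gradω zs))
    (hx' : g x' ≠ ⊤) (hu' : fenchelConj h u' ≠ ⊤) (t : ℕ) :
    (drawExpectation w (t + 1) fun r =>
        lagrangianReal (finiteSum ψ ω) g h (ergodicMean (fun k => x k r) t) u'
          - lagrangianReal (finiteSum ψ ω) g h x'
            (ergodicMean (fun k => γ⁻¹ • (y k r - z k r)) t))
      ≤ ((t : ℝ) + 1)⁻¹ * lyapunov γ (Lψ + Lω) q gradψ (x' + γ • u') (zs + γ • us) zs y0 α0 := by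
  have hdom := hrun.ne_top hγ hg hh hproxg hproxh
  have hstep := hrun.sum_mul_lagrangianReal_sub_add_lyapunov_le hw hψ hω hq hL hγ hLγ hg hh
    hproxg hproxh hstar hx' hu'
  have hV : ∀ k r, 0 ≤ lyapunov γ (Lψ + Lω) q gradψ (x' + γ • u') (zs + γ • us) zs (y k r)
      (α k r) := fun _ _ => lyapunov_nonneg hγ hL hq _ _ _ _ _ _
  let gap : ℕ → (ℕ → S) → ℝ := fun k r => lagrangianReal (finiteSum ψ ω) g h (x k r) u'
    - lagrangianReal (finiteSum ψ ω) g h x' (γ⁻¹ • (y k r - z k r))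
  have hmean := drawExpectation_ergodicMean_le (gap := gap) hw.nonneg hw.sum_eq_one hV hstep t
  simp only [hrun.y_zero, hrun.α_zero, drawExpectation_const hw.sum_eq_one] at hmean
  refine (drawExpectation_mono hw.nonneg fun r => ?_).trans hmean
  calc _ ≤ ergodicMean (fun k => gap k r) t :=
        lagrangianReal_ergodicMean_sub_le (smoothConvex_finiteSum hw.pos hψ hω).convexOn hg hh
          (fun k => (hdom k r).1) (fun k => (hdom k r).2) x' u' t
    _ = ergodicMean gap t r := by
        simp only [ergodicMean, Pi.smul_apply, Finset.sum_apply]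

end IsVRTOSRun

end Expectation

theorem vrtos_saddle_point_rate_general {E : Type*} [NormedAddCommGroup E]
    [InnerProductSpace ℝ E] [CompleteSpace E] {n : ℕ} {ψ : Fin n → E → ℝ} {gradψ : Fin n → E → E}
    {ω : E → ℝ} {gradω : E → E} {Lψ Lω : ℝ} (hψ : ∀ i, SmoothConvex (ψ i) (gradψ i) Lψ)
    (hω : SmoothConvex ω gradω Lω) (hL : 0 < Lψ + Lω)
    {g h : E → EReal} (hg : ProperConvex g) (hh : ProperConvex h)
    {γ : ℝ} (hγ : 0 < γ) (hLγ : 3 * (Lψ + Lω) * γ ≤ 1)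
    {proxg proxh : E → E} (hproxg : ∀ x, IsProxPoint γ g x (proxg x))
    (hproxh : ∀ x, IsProxPoint γ h x (proxh x))
    {xstar : E} (hxstar : ∀ x, (finiteSum ψ ω xstar : EReal) + g xstar + h xstar
      ≤ (finiteSum ψ ω x : EReal) + g x + h x)
    {ystar : E} (hfix : ystar - proxh ystar + proxg (2 • proxh ystar - ystar
      - γ • finiteSumGrad gradψ gradω (proxh ystar)) = ystar)
    {S : Type} [Fintype S] [Inhabited S] {w : S → ℝ} {sel : S → Fin n} {upd : S → Finset (Fin n)}
    {q : ℝ} (hw : IsUniformSampling w sel upd q) (hq : 0 < q)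
    {y0 : E} {α0 : Fin n → E} {y z x : ℕ → (ℕ → S) → E} {α : ℕ → (ℕ → S) → Fin n → E}
    (hrun : IsVRTOSRun gradψ gradω proxg proxh γ sel upd y0 α0 y z x α)
    {x' u' : E} (hx' : g x' ≠ ⊤) (hu' : fenchelConj h u' ≠ ⊤) (t : ℕ) :
    ∑ r : Fin (t + 1) → S, (prodW w (t + 1) r : EReal)
        * (lagrangian (finiteSum ψ ω) g h (ergodicMean (fun k => x k (extSeq (t + 1) r)) t) u'
          - lagrangian (finiteSum ψ ω) g h x' (ergodicMean
            (fun k => γ⁻¹ • (y k (extSeq (t + 1) r) - z k (extSeq (t + 1) r))) t))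
      ≤ ((10 * n / (q * (t + 1)) * (γ⁻¹ * q / (20 * n) * ‖y0 - (x' + γ • u')‖ ^ 2
        + γ⁻¹ * q / (2 * n) * ‖y0 - ystar‖ ^ 2
        + 1 / (2 * n * (Lψ + Lω)) * ∑ i, ‖α0 i - gradψ i xstar‖ ^ 2) : ℝ) : EReal) := by
  have hn : 0 < n := hw.pos
  have hstar := isSplittingStep_of_fixedPoint hγ hg hh hproxg hproxh hfix
  have hgs := hstar.hasSubgradientAt_left
  rw [sub_self, smul_zero, zero_sub] at hgs
  have hgrad := grad_eq_of_minimizer hψ hω hL hg hh hxstar hgs hstar.hasSubgradientAt_right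
  have hbound := hrun.drawExpectation_lagrangianReal_sub_le hw hψ hω hq hL hγ hLγ hg hh hproxg
    hproxh hstar hx' hu' t
  rw [← hrun.coe_drawExpectation_lagrangianReal_sub hγ hg hh hproxg hproxh hx' hu',
    EReal.coe_le_coe_iff]
  refine hbound.trans_eq ?_
  rw [smul_inv_smul₀ hγ.ne', add_sub_cancel]
  simp only [lyapunov, hgrad]
  field_simp
  ring

/-- Theorem 1, saddle-point rate of VR-TOS.  With step size `γ = 1/(3 L_f)`,
for every `(x, u) ∈ dom g × dom h*`, setting `y = x + γ u` and taking any fixed point `y*` of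
`G_γ`, the ergodic iterates of VR-TOS with uniform q-memorization satisfy
`E[L(x̄_t, u) − L(x, ū_t)] ≤ (10n/(q(t+1))) [ (3 L_f q/(20n))‖y_0 − y‖²
  + (3 L_f q/(2n))‖y_0 − y*‖² + H_0 ]`. -/
theorem vrtos_saddle_point_rate
    {n : ℕ} (hn : 0 < n)
    (ψ : Fin n → EuclideanSpace ℝ (Fin p) → ℝ)
    (gradψ : Fin n → EuclideanSpace ℝ (Fin p) → EuclideanSpace ℝ (Fin p))
    (Lψ : ℝ)
    (hψconv : ∀ i, ConvexOn ℝ Set.univ (ψ i))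
    (hψdiff : ∀ i x, HasGradientAt (ψ i) (gradψ i x) x)
    (hψlip : ∀ i x y, ‖gradψ i x - gradψ i y‖ ≤ Lψ * ‖x - y‖)
    (ω : EuclideanSpace ℝ (Fin p) → ℝ)
    (gradω : EuclideanSpace ℝ (Fin p) → EuclideanSpace ℝ (Fin p))
    (Lω : ℝ)
    (hωconv : ConvexOn ℝ Set.univ ω)
    (hωdiff : ∀ x, HasGradientAt ω (gradω x) x)
    (hωlip : ∀ x y, ‖gradω x - gradω y‖ ≤ Lω * ‖x - y‖)
    (Lf : ℝ) (hLf : Lf = Lψ + Lω) (hLfpos : 0 < Lf)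
    (f : EuclideanSpace ℝ (Fin p) → ℝ)
    (hf : ∀ x, f x = (n : ℝ)⁻¹ * ∑ j, ψ j x + ω x)
    (gradf : EuclideanSpace ℝ (Fin p) → EuclideanSpace ℝ (Fin p))
    (hgradf : ∀ x, gradf x = (n : ℝ)⁻¹ • ∑ j, gradψ j x + gradω x)
    -- the nonsmooth terms, their proximal operators, and the qualification condition
    (g h : EuclideanSpace ℝ (Fin p) → EReal)
    (hg : ProperLscConvex g) (hh : ProperLscConvex h)
    (hqual : (intrinsicInterior ℝ {x | g x ≠ ⊤} ∩ intrinsicInterior ℝ {x | h x ≠ ⊤}).Nonempty)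
    -- the step size γ = 1/(3 L_f)
    (γ : ℝ) (hγ : γ = 1 / (3 * Lf))
    (proxg proxh : EuclideanSpace ℝ (Fin p) → EuclideanSpace ℝ (Fin p))
    (hproxg : ∀ x, IsProx γ g x (proxg x))
    (hproxh : ∀ x, IsProx γ h x (proxh x))
    -- a minimizer x* of the primal objective and a fixed point y* of G_γ
    (xstar : EuclideanSpace ℝ (Fin p))
    (hxstar : ∀ x, ((f xstar : ℝ) : EReal) + g xstar + h xstar
        ≤ ((f x : ℝ) : EReal) + g x + h x)
    (ystar : EuclideanSpace ℝ (Fin p))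
    (hfix : ystar - proxh ystar
        + proxg (2 • proxh ystar - ystar - γ • gradf (proxh ystar)) = ystar)
    -- the per-iteration randomness: the sampled index `sel s` and the uniform
    -- q-memorization update set `upd s`, drawn i.i.d. across iterations
    {S : Type} [Fintype S] [Inhabited S]
    (w : S → ℝ) (hw : ∀ s, 0 ≤ w s) (hw1 : ∑ s, w s = 1)
    (sel : S → Fin n) (upd : S → Finset (Fin n)) (q : ℝ) (hq : 0 < q)
    (hmargsel : ∀ i : Fin n, ∑ s ∈ univ.filter (fun s => sel s = i), w s = 1 / n)
    (hmargupd : ∀ j : Fin n, ∑ s ∈ univ.filter (fun s => j ∈ upd s), w s = q / n)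
    -- the VR-TOS process, as a function of the infinite sequence of draws
    (y z x v : ℕ → (ℕ → S) → EuclideanSpace ℝ (Fin p))
    (α : ℕ → Fin n → (ℕ → S) → EuclideanSpace ℝ (Fin p))
    (y0 : EuclideanSpace ℝ (Fin p)) (hy0 : ∀ r, y 0 r = y0)
    (α0 : Fin n → EuclideanSpace ℝ (Fin p)) (hα0 : ∀ j r, α 0 j r = α0 j)
    (hz : ∀ t r, z t r = proxh (y t r))
    (hv : ∀ t r, v t r = gradψ (sel (r t)) (z t r) - α t (sel (r t)) r
        + (n : ℝ)⁻¹ • ∑ j, α t j r + gradω (z t r))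
    (hx : ∀ t r, x t r = proxg (2 • z t r - y t r - γ • v t r))
    (hy : ∀ t r, y (t + 1) r = y t r + x t r - z t r)
    (hα : ∀ t j r, α (t + 1) j r
        = if j ∈ upd (r t) then gradψ j (z t r) else α t j r)
    -- the ergodic (averaged) primal and dual iterates
    (xbar ubar : ℕ → (ℕ → S) → EuclideanSpace ℝ (Fin p))
    (hxbar : ∀ t r, xbar t r = ((t : ℝ) + 1)⁻¹ • ∑ k ∈ Finset.range (t + 1), x k r)
    (hubar : ∀ t r, ubar t r = ((t : ℝ) + 1)⁻¹ • ∑ k ∈ Finset.range (t + 1),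
        γ⁻¹ • (y k r - z k r))
    (H0 : ℝ) (hH0 : H0 = 1 / (2 * n * Lf) * ∑ i, ‖α0 i - gradψ i xstar‖ ^ 2) :
    ∀ t : ℕ, ∀ xx uu : EuclideanSpace ℝ (Fin p), g xx ≠ ⊤ → fconj h uu ≠ ⊤ →
      ∑ vdraw : Fin (t + 1) → S,
          ((prodW w (t + 1) vdraw : ℝ) : EReal)
            * (Lagr f g h (xbar t (extSeq (t + 1) vdraw)) uu
                - Lagr f g h xx (ubar t (extSeq (t + 1) vdraw)))
        ≤ ((10 * n / (q * (t + 1))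
            * (3 * Lf * q / (20 * n) * ‖y0 - (xx + γ • uu)‖ ^ 2
              + 3 * Lf * q / (2 * n) * ‖y0 - ystar‖ ^ 2 + H0) : ℝ) : EReal) := by
  obtain rfl : f = finiteSum ψ ω := funext hf
  obtain rfl : gradf = finiteSumGrad gradψ gradω := funext hgradf
  subst hLf hH0
  intro t xx uu hxx huu
  have hγinv : 3 * (Lψ + Lω) = γ⁻¹ := by rw [hγ, one_div, inv_inv]
  have hγpos : 0 < γ := hγ ▸ by positivity
  have hrun : IsVRTOSRun gradψ gradω proxg proxh γ sel upd y0 α0 y z x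
      (fun t r j => α t j r) :=
    ⟨hy0, fun r => funext fun j => hα0 j r, hz, fun t r => by rw [hx, hv]; rfl, hy,
      fun t r => funext fun j => hα t j r⟩
  simp only [hxbar, hubar, hγinv]
  exact vrtos_saddle_point_rate_general (fun i => ⟨hψconv i, hψdiff i, hψlip i⟩)
    ⟨hωconv, hωdiff, hωlip⟩ hLfpos ⟨hg.proper, hg.ne_bot, hg.convex⟩
    ⟨hh.proper, hh.ne_bot, hh.convex⟩ hγpos (hγinv ▸ inv_mul_cancel₀ hγpos.ne').le hproxg hproxh
    hxstar hfix ⟨hw, hw1, hmargsel, hmargupd⟩ hq hrun hxx huu t
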